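/- arXiv:2509.17795 — 2 statements merged into one kernel-verified Lean document; each statement's English description precedes it below -/
import Mathlib

section
/- If u and v are finite label sequences in the sequential stack specification Stack with disjoint value sets and u is matched (every value pushed in u is also popped in u), then the concatenation u·v is in Stack. Consequently, the concatenation of a linearization of a matched history u with a linearization of a history v (on disjoint value sets, where every operation of u precedes every operation of v) is a linearization of the combined history u·v. -/
attribute [local instance] Classical.propDecidable

/-- A stack label: `push x`, `pop (some x)`, or `pop none` (= pop(⊥), popping empty). -/
inductive Label where
  | push : ℕ → Label
  | pop  : Option ℕ → Label
  deriving DecidableEq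

/-- The value carried by a label (`none` for pop(⊥)). -/
def Label.val : Label → Option ℕ
  | .push x => some x
  | .pop v  => v

/-- The set of values occurring in a sequence of labels. -/
def seqVals (u : List Label) : Set ℕ :=
  {x | Label.push x ∈ u ∨ Label.pop (some x) ∈ u}

/-- A label sequence is matched if every pushed value is also popped. -/
def seqMatched (u : List Label) : Prop :=
  ∀ x : ℕ, Label.push x ∈ u → Label.pop (some x) ∈ u

/-- The sequential stack specification, as the least set of label sequences closed
under the rules Rε, R_PushPop, R_Push, R_PopEmpty. -/
inductive Stack : List Label → Prop
  | empty : Stack []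
  | pushPop (x : ℕ) (u v : List Label) :
      Stack (u ++ v) → Disjoint (seqVals u) (seqVals v) → seqMatched u →
      x ∉ seqVals u → x ∉ seqVals v →
      Stack (Label.push x :: (u ++ Label.pop (some x) :: v))
  | push (x : ℕ) (u v : List Label) :
      Stack (u ++ v) → Disjoint (seqVals u) (seqVals v) →
      Label.pop none ∉ v → x ∉ seqVals u → x ∉ seqVals v →
      Stack (u ++ Label.push x :: v)
  | popEmpty (u v : List Label) :
      Stack (u ++ v) → seqMatched u →
      Stack (u ++ Label.pop none :: v)

/-- An operation: a label with a call time and a return time, with call < return. -/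
structure Op where
  label : Label
  call : ℝ
  ret : ℝ
  call_lt_ret : call < ret

/-- The value of an operation. -/
def Op.val (o : Op) : Option ℕ := o.label.val

/-- A history (finite set of operations) is differentiated: each value is pushed by at
most one operation and popped by at most one operation. -/
def Differentiated (h : Finset Op) : Prop :=
  (∀ o1 ∈ h, ∀ o2 ∈ h, ∀ x : ℕ,
      o1.label = Label.push x → o2.label = Label.push x → o1 = o2) ∧
  (∀ o1 ∈ h, ∀ o2 ∈ h, ∀ x : ℕ,
      o1.label = Label.pop (some x) → o2.label = Label.pop (some x) → o1 = o2)

/-- The set of values occurring in a history. -/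
def hVals (h : Finset Op) : Set ℕ :=
  {x | ∃ o ∈ h, o.label = Label.push x ∨ o.label = Label.pop (some x)}

/-- A history is matched if every pushed value is also popped. -/
def HMatched (h : Finset Op) : Prop :=
  ∀ x : ℕ, (∃ o ∈ h, o.label = Label.push x) → ∃ o ∈ h, o.label = Label.pop (some x)

/-- A history has no pop(⊥) operations. -/
def NoPopEmpty (h : Finset Op) : Prop :=
  ∀ o ∈ h, o.label ≠ Label.pop none

/-- `ℓ` is a linearization of the history `h`: it lists (the operations of) `h`
exactly once each, respects precedence (`o1` precedes `o2` iff `o1.ret < o2.call`),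
and its label sequence is in the sequential stack specification. -/
def IsLinearization (h : Finset Op) (ℓ : List Op) : Prop :=
  ℓ.Nodup ∧ (∀ o : Op, o ∈ ℓ ↔ o ∈ h) ∧
  ℓ.Pairwise (fun o1 o2 => ¬ o2.ret < o1.call) ∧
  Stack (ℓ.map Op.label)

/-- A history is linearizable if it admits a linearization. -/
def Linearizable (h : Finset Op) : Prop := ∃ ℓ : List Op, IsLinearization h ℓ

/-- Projection of a history onto a set of (possibly-⊥) values. -/
noncomputable def projOpt (h : Finset Op) (V : Set (Option ℕ)) : Finset Op :=
  h.filter (fun o => o.val ∈ V)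

/-- Projection of a history onto a set of proper values. -/
noncomputable def projVal (h : Finset Op) (V : Set ℕ) : Finset Op :=
  h.filter (fun o => ∃ x ∈ V, o.val = some x)

/-- The history with all operations on value `x` removed. -/
noncomputable def removeVal (h : Finset Op) (x : ℕ) : Finset Op :=
  h.filter (fun o => o.val ≠ some x)

/-- A time point is covered if it lies in the I-segment [push(x).ret, pop(x).call]
of some value `x`. -/
def Covered (h : Finset Op) (t : ℝ) : Prop :=
  ∃ p ∈ h, ∃ q ∈ h, ∃ x : ℕ, p.label = Label.push x ∧ q.label = Label.pop (some x) ∧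
    p.ret ≤ t ∧ t ≤ q.call

/-- A P-segment: a maximal (nonempty) interval of covered points. -/
def IsPSegment (h : Finset Op) (S : Set ℝ) : Prop :=
  S.Nonempty ∧ S.OrdConnected ∧ (∀ t ∈ S, Covered h t) ∧
  ∀ T : Set ℝ, S ⊆ T → T.OrdConnected → (∀ t ∈ T, Covered h t) → T = S

/-- A D-segment (opening): a maximal (nonempty) interval of uncovered points. -/
def IsDSegment (h : Finset Op) (S : Set ℝ) : Prop :=
  S.Nonempty ∧ S.OrdConnected ∧ (∀ t ∈ S, ¬ Covered h t) ∧
  ∀ T : Set ℝ, S ⊆ T → T.OrdConnected → (∀ t ∈ T, ¬ Covered h t) → T = S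

/-- An inner (internal) D-segment: a D-segment with a P-segment before it and a
P-segment after it. -/
def InnerDSegment (h : Finset Op) (ξ : Set ℝ) : Prop :=
  IsDSegment h ξ ∧
  (∃ S : Set ℝ, IsPSegment h S ∧ ∀ s ∈ S, ∀ t ∈ ξ, s < t) ∧
  (∃ S : Set ℝ, IsPSegment h S ∧ ∀ s ∈ S, ∀ t ∈ ξ, t < s)

/-- `x` is minimal in `h`: `x` is pushed in `h` and no push of `h` returns before
`push(x)` is called. -/
def MinimalVal (h : Finset Op) (x : ℕ) : Prop :=
  ∃ px ∈ h, px.label = Label.push x ∧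
    ∀ p ∈ h, (∃ y : ℕ, p.label = Label.push y) → ¬ p.ret < px.call

/-- `x` is maximal in `h`: `x` is popped in `h` and no pop of `h` is called after
`pop(x)` returns. -/
def MaximalVal (h : Finset Op) (x : ℕ) : Prop :=
  ∃ qx ∈ h, qx.label = Label.pop (some x) ∧
    ∀ q ∈ h, (∃ v : Option ℕ, q.label = Label.pop v) → ¬ qx.ret < q.call

/-- A separation of the values of `h` into `L` and `R`: a partition such that no
operation on a value of `R` precedes an operation on a value of `L`. -/
def Separation (h : Finset Op) (L R : Set ℕ) : Prop :=
  L ∪ R = hVals h ∧ Disjoint L R ∧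
  ∀ o1 ∈ h, ∀ o2 ∈ h, ∀ r ∈ R, ∀ l ∈ L,
    o1.val = some r → o2.val = some l → ¬ o1.ret < o2.call

/-- Values of `h` whose I-segment lies (entirely) before the D-segment `ξ`. -/
def segL (h : Finset Op) (ξ : Set ℝ) : Set ℕ :=
  {x | ∃ px ∈ h, ∃ qx ∈ h, px.label = Label.push x ∧ qx.label = Label.pop (some x) ∧
    ∀ t ∈ Set.Icc px.ret qx.call, ∀ s ∈ ξ, t < s}

/-- Values of `h` whose I-segment lies (entirely) after the D-segment `ξ`. -/
def segR (h : Finset Op) (ξ : Set ℝ) : Set ℕ :=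
  {x | ∃ px ∈ h, ∃ qx ∈ h, px.label = Label.push x ∧ qx.label = Label.pop (some x) ∧
    ∀ t ∈ Set.Icc px.ret qx.call, ∀ s ∈ ξ, s < t}

/-!
Induct on the derivation of `u ∈ Stack`, absorbing `v` into the right-hand part of the last rule.
R_PushPop and R_PopEmpty then still apply: matchedness concerns only their unchanged left-hand part,
and the freshness conditions extend to `v` because the value sets are disjoint. R_Push would forbid
`pop(⊥)` in `v`, but it cannot be the last rule: it leaves its value unpopped, so `u` would not be
matched.
-/

section LabelSequence

variable {x : ℕ} {u v : List Label}

lemma seqVals_append (u v : List Label) : seqVals (u ++ v) = seqVals u ∪ seqVals v := by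
  ext y
  simp only [seqVals, Set.mem_ofPred_eq, Set.mem_union, List.mem_append]
  tauto

lemma seqVals_push_cons (x : ℕ) (u : List Label) :
    seqVals (Label.push x :: u) = insert x (seqVals u) := by
  ext y
  simp [seqVals, or_assoc]

lemma seqVals_pop_some_cons (x : ℕ) (u : List Label) :
    seqVals (Label.pop (some x) :: u) = insert x (seqVals u) := by
  ext y
  simp [seqVals, or_left_comm]

lemma seqVals_pop_none_cons (u : List Label) : seqVals (Label.pop none :: u) = seqVals u := by
  simp [seqVals]

lemma push_notMem_of_notMem_seqVals (hx : x ∉ seqVals u) : Label.push x ∉ u :=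
  fun h => hx (Or.inl h)

lemma pop_some_notMem_of_notMem_seqVals (hx : x ∉ seqVals u) : Label.pop (some x) ∉ u :=
  fun h => hx (Or.inr h)

lemma seqMatched_append_pop_none_cons :
    seqMatched (u ++ Label.pop none :: v) ↔ seqMatched (u ++ v) := by
  simp [seqMatched]

lemma seqMatched_push_cons_append_pop_cons (hxu : Label.push x ∉ u) (hxv : Label.push x ∉ v) :
    seqMatched (Label.push x :: (u ++ Label.pop (some x) :: v)) ↔ seqMatched (u ++ v) := by
  refine forall_congr' fun y => ?_
  obtain rfl | hyx := eq_or_ne y x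
  · simp [hxu, hxv]
  · simp [hyx]

lemma not_seqMatched_append_push_cons (hxu : Label.pop (some x) ∉ u)
    (hxv : Label.pop (some x) ∉ v) : ¬ seqMatched (u ++ Label.push x :: v) := by
  intro hmatched
  have hpop : Label.pop (some x) ∈ u ++ Label.push x :: v := hmatched x (by simp)
  simp [hxu, hxv] at hpop

theorem Stack.append (hu : Stack u) (hv : Stack v) (hdisj : Disjoint (seqVals u) (seqVals v))
    (hmatched : seqMatched u) : Stack (u ++ v) := by
  induction hu with
  | empty => exact hv
  | pushPop x a b _ hab ha hxa hxb ih =>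
    obtain ⟨hxv, hav, hbv⟩ :
        x ∉ seqVals v ∧ Disjoint (seqVals a) (seqVals v) ∧ Disjoint (seqVals b) (seqVals v) := by
      simpa [seqVals_append, seqVals_push_cons, seqVals_pop_some_cons] using hdisj
    have habv : Stack (a ++ (b ++ v)) := by
      rw [← List.append_assoc]
      refine ih (by simp [seqVals_append, hav, hbv]) ?_
      exact (seqMatched_push_cons_append_pop_cons (push_notMem_of_notMem_seqVals hxa)
        (push_notMem_of_notMem_seqVals hxb)).1 hmatched
    have ha_bv : Disjoint (seqVals a) (seqVals (b ++ v)) := by simp [seqVals_append, hab, hav]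
    have hx_bv : x ∉ seqVals (b ++ v) := by simp [seqVals_append, hxb, hxv]
    simpa using Stack.pushPop x a (b ++ v) habv ha_bv ha hxa hx_bv
  | push x a b _ _ _ hxa hxb =>
    exact absurd hmatched (not_seqMatched_append_push_cons (pop_some_notMem_of_notMem_seqVals hxa)
      (pop_some_notMem_of_notMem_seqVals hxb))
  | popEmpty a b _ ha ih =>
    have habv : Stack (a ++ (b ++ v)) := by
      rw [← List.append_assoc]
      refine ih ?_ (seqMatched_append_pop_none_cons.1 hmatched)
      simpa only [seqVals_append, seqVals_pop_none_cons] using hdisj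
    simpa using Stack.popEmpty a (b ++ v) habv ha

end LabelSequence

section History

variable {h : Finset Op} {ℓ : List Op}

lemma seqVals_map_label (hℓ : ∀ o, o ∈ ℓ ↔ o ∈ h) : seqVals (ℓ.map Op.label) = hVals h := by
  ext x
  simp only [seqVals, hVals, Set.mem_ofPred_eq, List.mem_map, hℓ, and_or_left, exists_or]

lemma seqMatched_map_label (hℓ : ∀ o, o ∈ ℓ ↔ o ∈ h) :
    seqMatched (ℓ.map Op.label) ↔ HMatched h := by
  simp only [seqMatched, HMatched, List.mem_map, hℓ]

lemma Op.not_ret_lt_call_of_ret_lt_call {o₁ o₂ : Op} (h₁₂ : o₁.ret < o₂.call) :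
    ¬ o₂.ret < o₁.call := by
  linarith [o₁.call_lt_ret, o₂.call_lt_ret]

lemma disjoint_of_forall_ret_lt_call {hu hv : Finset Op}
    (hprec : ∀ o₁ ∈ hu, ∀ o₂ ∈ hv, o₁.ret < o₂.call) : Disjoint hu hv :=
  Finset.disjoint_left.2 fun o ho_u ho_v => (hprec o ho_u o ho_v).not_gt o.call_lt_ret

end History

theorem stack_concatenation_general :
    (∀ u v : List Label, Stack u → Stack v →
        Disjoint (seqVals u) (seqVals v) → seqMatched u → Stack (u ++ v)) ∧
    (∀ (hu hv : Finset Op) (ℓu ℓv : List Op),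
        Disjoint hu hv → Disjoint (hVals hu) (hVals hv) → HMatched hu →
        (∀ o1 ∈ hu, ∀ o2 ∈ hv, ¬ o2.ret < o1.call) →
        IsLinearization hu ℓu → IsLinearization hv ℓv →
        IsLinearization (hu ∪ hv) (ℓu ++ ℓv)) := by
  refine ⟨fun _ _ => Stack.append, ?_⟩
  rintro hu hv ℓu ℓv hdisj hvals hmatched hprec ⟨hnodup_u, hmem_u, hpair_u, hstack_u⟩
    ⟨hnodup_v, hmem_v, hpair_v, hstack_v⟩
  refine ⟨hnodup_u.append hnodup_v ?_, by simp [hmem_u, hmem_v],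
    List.pairwise_append.2 ⟨hpair_u, hpair_v, ?_⟩, ?_⟩
  · simpa only [List.Disjoint, hmem_u, hmem_v] using Finset.disjoint_left.1 hdisj
  · simpa only [hmem_u, hmem_v] using hprec
  · rw [List.map_append]
    refine hstack_u.append hstack_v ?_ ((seqMatched_map_label hmem_u).2 hmatched)
    rwa [seqVals_map_label hmem_u, seqVals_map_label hmem_v]

/-- Concatenation: (1) if `u, v ∈ Stack` have disjoint value sets and `u` is matched,
then `u ++ v ∈ Stack`; (2) consequently, concatenating a linearization of a matched
history with a linearization of a history on disjoint values, where every operation of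
the first precedes every operation of the second, yields a linearization of the
combined history. -/
theorem stack_concatenation :
    (∀ u v : List Label, Stack u → Stack v →
        Disjoint (seqVals u) (seqVals v) → seqMatched u → Stack (u ++ v)) ∧
    (∀ (hu hv : Finset Op) (ℓu ℓv : List Op),
        Differentiated (hu ∪ hv) →
        Disjoint (hVals hu) (hVals hv) → HMatched hu →
        (∀ o1 ∈ hu, ∀ o2 ∈ hv, o1.ret < o2.call) →
        IsLinearization hu ℓu → IsLinearization hv ℓv →
        IsLinearization (hu ∪ hv) (ℓu ++ ℓv)) :=
  ⟨stack_concatenation_general.1, fun hu hv ℓu ℓv _ hvals hmatched hprec =>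
    stack_concatenation_general.2 hu hv ℓu ℓv (disjoint_of_forall_ret_lt_call hprec) hvals hmatched
      fun o1 h1 o2 h2 => Op.not_ret_lt_call_of_ret_lt_call (hprec o1 h1 o2 h2)⟩
end

section
/- A differentiated history h is linearizable with respect to the sequential stack specification if and only if for every set V of values (possibly including the symbol ⊥), the projection h|V is linearizable. -/
attribute [local instance] Classical.propDecidable

theorem seqVals_mono {u v : List Label} (huv : u ⊆ v) : seqVals u ⊆ seqVals v :=
  fun _ => Or.imp (@huv _) (@huv _)

theorem seqVals_filter_subset (p : Label → Bool) (u : List Label) :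
    seqVals (u.filter p) ⊆ seqVals u :=
  seqVals_mono (List.filter_subset_self u)

theorem seqMatched.filter_val {u : List Label} (hu : seqMatched u) (p : Option ℕ → Bool) :
    seqMatched (u.filter fun l => p l.val) := by
  intro x hpush
  obtain ⟨hmem, hp⟩ := List.mem_filter.1 hpush
  exact List.mem_filter.2 ⟨hu x hmem, hp⟩

/-- A predicate on values keeps or drops `push x` and `pop x` together, so each rule of a
derivation either survives the filtering or disappears from it. -/
theorem Stack.filter_val {u : List Label} (hu : Stack u) (p : Option ℕ → Bool) :
    Stack (u.filter fun l => p l.val) := by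
  have notMem_filter {x : ℕ} {w : List Label} (hx : x ∉ seqVals w) :
      x ∉ seqVals (w.filter fun l => p l.val) :=
    Set.notMem_subset (seqVals_filter_subset _ w) hx
  have disjoint_filter {w w' : List Label} (hw : Disjoint (seqVals w) (seqVals w')) :
      Disjoint (seqVals (w.filter fun l => p l.val)) (seqVals (w'.filter fun l => p l.val)) :=
    hw.mono (seqVals_filter_subset _ w) (seqVals_filter_subset _ w')
  induction hu with
  | empty => exact .empty
  | pushPop x u v _ hdisj hmatched hxu hxv ih =>
    rw [List.filter_append] at ih
    simp only [List.filter_cons, List.filter_append, Label.val]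
    split_ifs
    · exact .pushPop x _ _ ih (disjoint_filter hdisj) (hmatched.filter_val p)
        (notMem_filter hxu) (notMem_filter hxv)
    · exact ih
  | push x u v _ hdisj hpopEmpty hxu hxv ih =>
    rw [List.filter_append] at ih
    simp only [List.filter_cons, List.filter_append, Label.val]
    split_ifs
    · exact .push x _ _ ih (disjoint_filter hdisj) (mt List.mem_of_mem_filter hpopEmpty)
        (notMem_filter hxu) (notMem_filter hxv)
    · exact ih
  | popEmpty u v _ hmatched ih =>
    rw [List.filter_append] at ih
    simp only [List.filter_cons, List.filter_append, Label.val]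
    split_ifs
    · exact .popEmpty _ _ ih (hmatched.filter_val p)
    · exact ih

theorem IsLinearization.filter_val {h : Finset Op} {ℓ : List Op} (hℓ : IsLinearization h ℓ)
    (p : Option ℕ → Bool) :
    IsLinearization (h.filter fun o => p o.val) (ℓ.filter fun o => p o.val) := by
  obtain ⟨hnodup, hmem, hprec, hstack⟩ := hℓ
  refine ⟨hnodup.filter _, fun o => ?_, hprec.filter _, ?_⟩
  · rw [List.mem_filter, Finset.mem_filter, hmem]
  · have hfilter := hstack.filter_val p
    rwa [List.filter_map] at hfilter

theorem Linearizable.projOpt {h : Finset Op} (hlin : Linearizable h) (V : Set (Option ℕ)) :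
    Linearizable (projOpt h V) := by
  obtain ⟨ℓ, hℓ⟩ := hlin
  have hfilter := hℓ.filter_val fun v => decide (v ∈ V)
  simp only [decide_eq_true_eq] at hfilter
  exact ⟨_, hfilter⟩

theorem projOpt_univ (h : Finset Op) : projOpt h Set.univ = h := by
  simp [projOpt]

/-- Projection preserves linearizability: a differentiated history is linearizable iff
all of its projections are linearizable. -/
theorem linearizable_iff_all_projections (h : Finset Op) (hdiff : Differentiated h) :
    Linearizable h ↔ ∀ V : Set (Option ℕ), Linearizable (projOpt h V) :=
  ⟨fun hlin V => hlin.projOpt V, fun hproj => projOpt_univ h ▸ hproj Set.univ⟩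
end
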